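/- Lemma 1, point 2 (every parameter is trained by the task for at least Δ epochs): let Δ > 0 be the number of training epochs between two consecutive partition updates, and suppose the partition used at training epoch e is A (e / Δ) (integer division). Then for every parameter i : Fin S, the number of epochs e < Δ·(S − k + 1) at which i belongs to the partition in use (i.e. i ∈ A (e / Δ)) is at least Δ. -/

import Mathlib

/-- Lemma 1, point 2: with `Δ > 0` training epochs between two consecutive
partition updates (the partition used at epoch `e` being `A (e / Δ)`),
every parameter `i` belongs to the partition in use for at least `Δ` of the
epochs `e < Δ·(S − k + 1)`. -/
theorem maximum_roaming_each_param_trained_delta_epochs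
    (S k : ℕ) (hS : 0 < S) (hk : 0 < k) (hkS : k ≤ S)
    (A B : ℕ → Finset (Fin S))
    (hB : ∀ c, B c = (Finset.range (c + 1)).biUnion A)
    (hA0 : (A 0).card = k)
    (hupd : ∀ c, c < S - k →
      ∃ im ∈ A c, ∃ ip ∉ B c, A (c + 1) = insert ip ((A c).erase im))
    (hfreeze : ∀ c, S - k ≤ c → A (c + 1) = A c)
    (Δ : ℕ) (hΔ : 0 < Δ) :
    ∀ i : Fin S,
      Δ ≤ ((Finset.range (Δ * (S - k + 1))).filter (fun e => i ∈ A (e / Δ))).card := by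
  intro i
  have hcard : ∀ c, c ≤ S - k → k + c ≤ (B c).card := by
    intro c
    induction c with
    | zero => intro _; simp [hB, hA0]
    | succ c ih =>
      intro hc
      obtain ⟨im, _, ip, hip, hA⟩ := hupd c (by omega)
      have hsub : insert ip (B c) ⊆ B (c + 1) := by
        rw [hB (c + 1), Finset.range_add_one, Finset.biUnion_insert, ← hB c, hA]
        intro x hx
        simp only [Finset.mem_insert, Finset.mem_union] at hx ⊢
        tauto
      have h1 := Finset.card_le_card hsub
      rw [Finset.card_insert_of_notMem hip] at h1
      have := ih (by omega)
      omega
  have huniv : B (S - k) = Finset.univ := by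
    apply Finset.eq_univ_of_card
    have h1 := hcard (S - k) le_rfl
    have h2 := Finset.card_le_univ (B (S - k))
    simp only [Fintype.card_fin] at h2 ⊢
    omega
  have hi : i ∈ B (S - k) := by rw [huniv]; exact Finset.mem_univ i
  rw [hB, Finset.mem_biUnion] at hi
  obtain ⟨c, hc, hic⟩ := hi
  rw [Finset.mem_range] at hc
  have hsub : Finset.Ico (Δ * c) (Δ * c + Δ) ⊆
      (Finset.range (Δ * (S - k + 1))).filter (fun e => i ∈ A (e / Δ)) := by
    intro e he
    rw [Finset.mem_Ico] at he
    have hdiv : e / Δ = c := by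
      apply Nat.div_eq_of_lt_le
      · linarith [mul_comm Δ c]
      · linarith [Nat.succ_mul c Δ, mul_comm Δ c]
    rw [Finset.mem_filter, Finset.mem_range, hdiv]
    refine ⟨?_, hic⟩
    have h := Nat.mul_le_mul_left Δ (show c + 1 ≤ S - k + 1 from hc)
    rw [Nat.mul_succ] at h
    omega
  have h := Finset.card_le_card hsub
  rw [Nat.card_Ico] at h
  omega
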